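/- arXiv:2007.03461 — 2 statements merged into one kernel-verified Lean document; each statement's English description precedes it below -/
import Mathlib

section
/- CDF of the per-hop SNR: let I be a random variable whose law has the mixture EGG density f with parameters ω ∈ (0,1), λ > 0, a > 0, b > 0, c > 0, let μ > 0 and r > 0, and set γ = μ·I^r. Then for every x > 0, P(γ ≤ x) = ω·(1 − exp(−(1/λ)·(x/μ)^(1/r))) + ((1−ω)/Γ(a))·∫₀^{(1/b^c)·(x/μ)^(c/r)} t^(a−1)·exp(−t) dt. -/
/-!
The event `μ * I ^ r ≤ x` agrees, on the half-line `0 < I` that carries the law, with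
`I ≤ T` where `T = (x / μ) ^ (1 / r)`. The probability is therefore the integral of the density
over `(0, T]`. The exponential summand has the primitive `-lam * exp (-y / lam)`; the generalized
Gamma summand is the pullback of the Gamma density under the substitution `t = (y / b) ^ c`,
which maps `(0, T]` bijectively onto `(0, (T / b) ^ c]`. The change of variables formula gives both
integrability and the value of the integral.
-/

open MeasureTheory Real Set ProbabilityTheory

/-- The mixture Exponential–Generalized Gamma (EGG) density. -/
noncomputable def eggDensity (ω lam a b c : ℝ) : ℝ → ℝ := fun x =>
  if 0 < x then
    ω / lam * Real.exp (-x / lam)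
      + (1 - ω) * c * x ^ (a * c - 1) / (b ^ (a * c) * Real.Gamma a)
        * Real.exp (-(x / b) ^ c)
  else 0

lemma image_scaled_rpow_Ioc {b c T : ℝ} (hb : 0 < b) (hc : 0 < c) (hT : 0 < T) :
    (fun y : ℝ => (y / b) ^ c) '' Ioc 0 T = Ioc 0 ((T / b) ^ c) := by
  ext t
  constructor
  · rintro ⟨y, ⟨hy0, hyT⟩, rfl⟩
    exact ⟨by positivity, Real.rpow_le_rpow (by positivity) (by gcongr) hc.le⟩
  · rintro ⟨ht0, htT⟩
    refine ⟨b * t ^ c⁻¹, ⟨by positivity, ?_⟩, ?_⟩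
    · have h := (Real.rpow_inv_le_iff_of_pos ht0.le (by positivity : 0 ≤ T / b) hc).2 htT
      rw [le_div_iff₀ hb] at h
      linarith
    · change (b * t ^ c⁻¹ / b) ^ c = t
      rw [mul_div_cancel_left₀ _ hb.ne', Real.rpow_inv_rpow ht0.le hc.ne']

lemma injOn_scaled_rpow {b c T : ℝ} (hb : 0 < b) (hc : 0 < c) :
    InjOn (fun y : ℝ => (y / b) ^ c) (Ioc 0 T) := by
  intro y hy z hz h
  have h0 := hy.1
  have h1 := hz.1
  have := (Real.rpow_left_inj (by positivity) (by positivity) hc.ne').1 h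
  field_simp at this
  exact this

lemma hasDerivAt_scaled_rpow {b c y : ℝ} (hb : 0 < b) (hy : 0 < y) :
    HasDerivAt (fun y : ℝ => (y / b) ^ c) (c / b * (y / b) ^ (c - 1)) y := by
  have h := ((hasDerivAt_id y).div_const b).rpow_const (p := c)
    (Or.inl (div_pos hy hb).ne')
  refine h.congr_deriv ?_
  simp only [id]
  ring

/-- The Jacobian of `y ↦ (y / b) ^ c` times the pulled-back Gamma integrand is the generalized
Gamma integrand. -/
lemma jacobian_smul_gamma {a b c y : ℝ} (hb : 0 < b) (hc : 0 < c) (hy : 0 < y) :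
    |c / b * (y / b) ^ (c - 1)| •
        (((y / b) ^ c) ^ (a - 1) * Real.exp (-(y / b) ^ c))
      = c * y ^ (a * c - 1) / b ^ (a * c) * Real.exp (-(y / b) ^ c) := by
  have hyb : 0 < y / b := div_pos hy hb
  rw [abs_of_pos (by positivity), smul_eq_mul, ← Real.rpow_mul hyb.le, ← mul_assoc,
    mul_assoc (c / b), ← Real.rpow_add hyb, show c - 1 + c * (a - 1) = a * c - 1 by ring,
    Real.div_rpow hy.le hb.le, Real.rpow_sub_one hb.ne']
  have := (Real.rpow_pos_of_pos hb (a * c)).ne'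
  field_simp

lemma integrableOn_gamma_Ioc {a : ℝ} (ha : 0 < a) (S : ℝ) :
    IntegrableOn (fun t : ℝ => t ^ (a - 1) * Real.exp (-t)) (Ioc 0 S) := by
  refine ((Real.GammaIntegral_convergent ha).mono_set Ioc_subset_Ioi_self).congr_fun ?_
    measurableSet_Ioc
  intro t _
  exact mul_comm _ _

lemma integrableOn_genGamma {a b c T : ℝ} (ha : 0 < a) (hb : 0 < b) (hc : 0 < c) (hT : 0 < T) :
    IntegrableOn (fun y : ℝ => c * y ^ (a * c - 1) / b ^ (a * c) * Real.exp (-(y / b) ^ c))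
      (Ioc 0 T) := by
  have h := (integrableOn_image_iff_integrableOn_abs_deriv_smul measurableSet_Ioc
    (fun y hy => (hasDerivAt_scaled_rpow (c := c) hb hy.1).hasDerivWithinAt)
    (injOn_scaled_rpow (T := T) hb hc) (fun t : ℝ => t ^ (a - 1) * Real.exp (-t))).1
    (by rw [image_scaled_rpow_Ioc hb hc hT]; exact integrableOn_gamma_Ioc ha _)
  exact h.congr_fun (fun y hy => jacobian_smul_gamma hb hc hy.1) measurableSet_Ioc

lemma integral_genGamma {a b c T : ℝ} (hb : 0 < b) (hc : 0 < c) (hT : 0 < T) :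
    ∫ y in Ioc 0 T, c * y ^ (a * c - 1) / b ^ (a * c) * Real.exp (-(y / b) ^ c)
      = ∫ t in Ioc 0 ((T / b) ^ c), t ^ (a - 1) * Real.exp (-t) := by
  rw [← image_scaled_rpow_Ioc hb hc hT,
    integral_image_eq_integral_abs_deriv_smul measurableSet_Ioc
      (fun y hy => (hasDerivAt_scaled_rpow (c := c) hb hy.1).hasDerivWithinAt)
      (injOn_scaled_rpow (T := T) hb hc)]
  exact setIntegral_congr_fun measurableSet_Ioc
    (fun y hy => (jacobian_smul_gamma hb hc hy.1).symm)

lemma integral_exp_part {ω lam T : ℝ} (hT : 0 < T) :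
    ∫ y in Ioc 0 T, ω / lam * Real.exp (-y / lam)
      = ω * (1 - Real.exp (-(1 / lam) * T)) := by
  rw [← intervalIntegral.integral_of_le hT.le,
    intervalIntegral.integral_eq_sub_of_hasDerivAt (f := fun y => -ω * Real.exp (-y / lam))]
  · rw [show -T / lam = -(1 / lam) * T by ring]
    simp
    ring
  · intro y _
    refine ((((hasDerivAt_id y).neg.div_const lam).exp).const_mul (-ω)).congr_deriv ?_
    simp only [id, Pi.neg_apply]
    ring
  · exact Continuous.intervalIntegrable (by fun_prop) _ _

lemma eggDensity_of_pos {ω lam a b c y : ℝ} (hy : 0 < y) :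
    eggDensity ω lam a b c y = ω / lam * Real.exp (-y / lam)
      + (1 - ω) / Real.Gamma a *
        (c * y ^ (a * c - 1) / b ^ (a * c) * Real.exp (-(y / b) ^ c)) := by
  rw [eggDensity, if_pos hy]
  ring

lemma eggDensity_nonneg {ω lam a b c : ℝ} (hω : ω ∈ Set.Ioo (0 : ℝ) 1) (hlam : 0 < lam)
    (ha : 0 < a) (hb : 0 < b) (hc : 0 < c) (y : ℝ) : 0 ≤ eggDensity ω lam a b c y := by
  have h0 := hω.1
  have h1 : 0 < 1 - ω := sub_pos.2 hω.2
  have hG := Real.Gamma_pos_of_pos ha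
  by_cases hy : 0 < y
  · rw [eggDensity_of_pos hy]
    positivity
  · rw [eggDensity, if_neg hy]

theorem snr_cdf {Ω : Type*} [MeasurableSpace Ω] (P : Measure Ω) [IsProbabilityMeasure P]
    (I : Ω → ℝ) (hI : Measurable I)
    (ω lam a b c : ℝ)
    (hω : ω ∈ Set.Ioo (0 : ℝ) 1) (hlam : 0 < lam) (ha : 0 < a) (hb : 0 < b) (hc : 0 < c)
    (hlaw : Measure.map I P
      = volume.withDensity (fun x => ENNReal.ofReal (eggDensity ω lam a b c x)))
    (μ r : ℝ) (hμ : 0 < μ) (hr : 0 < r) (x : ℝ) (hx : 0 < x) :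
    P {ω' | μ * I ω' ^ r ≤ x}
      = ENNReal.ofReal
          (ω * (1 - Real.exp (-(1 / lam) * (x / μ) ^ (1 / r)))
            + (1 - ω) / Real.Gamma a
                * ∫ t in (0 : ℝ)..((1 / b ^ c) * (x / μ) ^ (c / r)),
                    t ^ (a - 1) * Real.exp (-t)) := by
  have hxμ : 0 < x / μ := div_pos hx hμ
  set T : ℝ := (x / μ) ^ (1 / r) with hTdef
  have hT : 0 < T := Real.rpow_pos_of_pos hxμ _
  have hS : (1 / b ^ c) * (x / μ) ^ (c / r) = (T / b) ^ c := by
    rw [Real.div_rpow hT.le hb.le, hTdef, ← Real.rpow_mul hxμ.le,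
      show 1 / r * c = c / r by ring]
    ring
  have hmeas : MeasurableSet {y : ℝ | μ * y ^ r ≤ x} :=
    measurableSet_le (by fun_prop) measurable_const
  have hiff : ∀ y : ℝ, 0 < y → (μ * y ^ r ≤ x ↔ y ≤ T) := by
    intro y hy
    rw [hTdef, one_div, Real.le_rpow_inv_iff_of_pos hy.le hxμ.le hr, le_div_iff₀ hμ, mul_comm]
  have hint : ∫⁻ y in {y : ℝ | μ * y ^ r ≤ x}, ENNReal.ofReal (eggDensity ω lam a b c y)
      = ∫⁻ y in Ioc 0 T, ENNReal.ofReal (eggDensity ω lam a b c y) := by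
    rw [← lintegral_indicator hmeas, ← lintegral_indicator measurableSet_Ioc]
    congr 1
    ext y
    by_cases hy : 0 < y
    · simp only [Set.indicator, mem_ofPred_eq, mem_Ioc, hy, true_and, hiff y hy]
    · have : eggDensity ω lam a b c y = 0 := by rw [eggDensity, if_neg hy]
      simp [Set.indicator, this]
  have hexp : IntegrableOn (fun y : ℝ => ω / lam * Real.exp (-y / lam)) (Ioc 0 T) :=
    (Continuous.integrableOn_Icc (by fun_prop)).mono_set Ioc_subset_Icc_self
  have hgam := (integrableOn_genGamma ha hb hc hT).const_mul ((1 - ω) / Real.Gamma a)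
  have heq : EqOn (fun y => ω / lam * Real.exp (-y / lam)
      + (1 - ω) / Real.Gamma a *
        (c * y ^ (a * c - 1) / b ^ (a * c) * Real.exp (-(y / b) ^ c)))
      (eggDensity ω lam a b c) (Ioc 0 T) := fun y hy => (eggDensity_of_pos hy.1).symm
  have hegg : IntegrableOn (eggDensity ω lam a b c) (Ioc 0 T) :=
    IntegrableOn.congr_fun (hexp.add hgam) heq measurableSet_Ioc
  change P (I ⁻¹' {y : ℝ | μ * y ^ r ≤ x}) = _
  rw [← Measure.map_apply hI hmeas, hlaw, withDensity_apply _ hmeas, hint,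
    ← ofReal_integral_eq_lintegral_ofReal hegg
      (Filter.Eventually.of_forall (eggDensity_nonneg hω hlam ha hb hc)),
    ← setIntegral_congr_fun measurableSet_Ioc heq, integral_add hexp hgam,
    integral_exp_part hT, integral_const_mul, integral_genGamma hb hc hT, hS,
    intervalIntegral.integral_of_le (by positivity)]
end

section
/- High-SNR asymptotics of the single-hop outage probability: fix x > 0 and parameters ω ∈ (0,1), λ > 0, a > 0, b > 0, c > 0, r > 0, and for μ > 0 define F(μ) = ω·(1 − exp(−(1/λ)·(x/μ)^(1/r))) + ((1−ω)/Γ(a))·∫₀^{(1/b^c)·(x/μ)^(c/r)} t^(a−1)·e^(−t) dt (the per-hop SNR CDF at x) and A(μ) = ω·(x/(λ^r·μ))^(1/r) + ((1−ω)/Γ(a+1))·(x/(b^r·μ))^(a·c/r). Then F(μ)/A(μ) tends to 1 as μ → ∞. -/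
/-!
With `y = (x/μ)^(1/r) / λ` and `z = (x/μ)^(c/r) / b^c`, the numerator is
`ω (1 - exp (-y)) + (1-ω)/Γ(a) · γ(a, z)`, where `γ` is the lower incomplete gamma function, and the
denominator is `ω y + (1-ω)/Γ(a) · z^a / a`. Both summands are compared with the same relative
error: `y exp (-y) ≤ 1 - exp (-y) ≤ y`, and bounding `exp (-t)` between `exp (-z)` and `1` on
`[0, z]` gives `exp (-z) z^a / a ≤ γ(a, z) ≤ z^a / a`. So the quotient lies in
`[exp (-(y + z)), 1]`, and `y, z → 0` as `μ → ∞`.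
-/

open MeasureTheory Real Set Filter

lemma integral_rpow_sub_one {a z : ℝ} (ha : 0 < a) :
    ∫ t in (0 : ℝ)..z, t ^ (a - 1) = z ^ a / a := by
  rw [integral_rpow (Or.inl (by linarith))]
  simp [Real.zero_rpow ha.ne']

lemma intervalIntegrable_gamma_integrand {a z : ℝ} (ha : 0 < a) :
    IntervalIntegrable (fun t : ℝ => t ^ (a - 1) * Real.exp (-t)) volume 0 z :=
  (intervalIntegral.intervalIntegrable_rpow' (by linarith)).mul_continuousOn (by fun_prop)

lemma lowerGamma_le {a z : ℝ} (ha : 0 < a) (hz : 0 ≤ z) :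
    ∫ t in (0 : ℝ)..z, t ^ (a - 1) * Real.exp (-t) ≤ z ^ a / a := by
  rw [← integral_rpow_sub_one ha]
  refine intervalIntegral.integral_mono_on hz (intervalIntegrable_gamma_integrand ha)
    (intervalIntegral.intervalIntegrable_rpow' (by linarith)) fun t ht => ?_
  exact mul_le_of_le_one_right (Real.rpow_nonneg ht.1 _) (Real.exp_le_one_iff.2 (by linarith [ht.1]))

lemma le_lowerGamma {a z : ℝ} (ha : 0 < a) (hz : 0 ≤ z) :
    Real.exp (-z) * (z ^ a / a) ≤ ∫ t in (0 : ℝ)..z, t ^ (a - 1) * Real.exp (-t) := by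
  rw [← integral_rpow_sub_one ha, mul_comm, ← intervalIntegral.integral_mul_const]
  refine intervalIntegral.integral_mono_on hz
    ((intervalIntegral.intervalIntegrable_rpow' (by linarith)).mul_const _)
    (intervalIntegrable_gamma_integrand ha) fun t ht => ?_
  exact mul_le_mul_of_nonneg_left (Real.exp_le_exp.2 (by linarith [ht.2]))
    (Real.rpow_nonneg ht.1 _)

lemma mul_exp_neg_le_one_sub_exp_neg (y : ℝ) : Real.exp (-y) * y ≤ 1 - Real.exp (-y) := by
  have h := mul_le_mul_of_nonneg_left (Real.add_one_le_exp y) (Real.exp_pos (-y)).le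
  rw [← Real.exp_add, neg_add_cancel, Real.exp_zero] at h
  linarith

/-- The relative error of the leading-order approximation, for weights `p, q > 0`. -/
lemma ratio_mem_Icc {p q a y z : ℝ} (hp : 0 < p) (hq : 0 < q) (ha : 0 < a)
    (hy : 0 < y) (hz : 0 < z) :
    (p * (1 - Real.exp (-y)) + q * ∫ t in (0 : ℝ)..z, t ^ (a - 1) * Real.exp (-t))
      / (p * y + q * (z ^ a / a)) ∈ Set.Icc (Real.exp (-(y + z))) 1 := by
  have hza : 0 < z ^ a / a := div_pos (Real.rpow_pos_of_pos hz a) ha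
  have hD : 0 < p * y + q * (z ^ a / a) := by positivity
  constructor
  · rw [le_div_iff₀ hD]
    have h1 : Real.exp (-(y + z)) * y ≤ 1 - Real.exp (-y) :=
      (mul_le_mul_of_nonneg_right (Real.exp_le_exp.2 (by linarith)) hy.le).trans
        (mul_exp_neg_le_one_sub_exp_neg y)
    have h2 : Real.exp (-(y + z)) * (z ^ a / a)
        ≤ ∫ t in (0 : ℝ)..z, t ^ (a - 1) * Real.exp (-t) :=
      (mul_le_mul_of_nonneg_right (Real.exp_le_exp.2 (by linarith)) hza.le).trans
        (le_lowerGamma ha hz.le)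
    linarith [mul_le_mul_of_nonneg_left h1 hp.le, mul_le_mul_of_nonneg_left h2 hq.le]
  · rw [div_le_one hD]
    have h1 : 1 - Real.exp (-y) ≤ y := by linarith [Real.add_one_le_exp (-y)]
    exact add_le_add (mul_le_mul_of_nonneg_left h1 hp.le)
      (mul_le_mul_of_nonneg_left (lowerGamma_le ha hz.le) hq.le)

lemma tendsto_const_mul_div_rpow (x k : ℝ) {s : ℝ} (hs : 0 < s) :
    Tendsto (fun μ : ℝ => k * (x / μ) ^ s) atTop (nhds 0) := by
  have h : Tendsto (fun μ : ℝ => x / μ) atTop (nhds 0) := tendsto_const_nhds.div_atTop tendsto_id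
  simpa [Real.zero_rpow hs.ne'] using (h.rpow_const (Or.inr hs.le)).const_mul k

theorem outage_high_snr_asymptotics (x ω lam a b c r : ℝ)
    (hx : 0 < x) (hω : ω ∈ Set.Ioo (0 : ℝ) 1) (hlam : 0 < lam) (ha : 0 < a) (hb : 0 < b)
    (hc : 0 < c) (hr : 0 < r) :
    Tendsto
      (fun μ : ℝ =>
        (ω * (1 - Real.exp (-(1 / lam) * (x / μ) ^ (1 / r)))
            + (1 - ω) / Real.Gamma a
                * ∫ t in (0 : ℝ)..((1 / b ^ c) * (x / μ) ^ (c / r)),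
                    t ^ (a - 1) * Real.exp (-t))
          / (ω * (x / (lam ^ r * μ)) ^ (1 / r)
              + (1 - ω) / Real.Gamma (a + 1) * (x / (b ^ r * μ)) ^ (a * c / r)))
      atTop (nhds 1) := by
  have hω0 : 0 < ω := hω.1
  have hω1 : 0 < 1 - ω := sub_pos.2 hω.2
  have hΓ : 0 < Real.Gamma a := Real.Gamma_pos_of_pos ha
  have hlim : Tendsto (fun μ : ℝ => Real.exp (-((1 / lam) * (x / μ) ^ (1 / r)
      + (1 / b ^ c) * (x / μ) ^ (c / r)))) atTop (nhds 1) := by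
    have h := ((tendsto_const_mul_div_rpow x (1 / lam) (one_div_pos.2 hr)).add
      (tendsto_const_mul_div_rpow x (1 / b ^ c) (div_pos hc hr))).neg.rexp
    simpa only [add_zero, neg_zero, Real.exp_zero] using h
  have key : ∀ᶠ μ : ℝ in atTop,
      (ω * (1 - Real.exp (-(1 / lam) * (x / μ) ^ (1 / r)))
          + (1 - ω) / Real.Gamma a
              * ∫ t in (0 : ℝ)..((1 / b ^ c) * (x / μ) ^ (c / r)),
                  t ^ (a - 1) * Real.exp (-t))
        / (ω * (x / (lam ^ r * μ)) ^ (1 / r)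
            + (1 - ω) / Real.Gamma (a + 1) * (x / (b ^ r * μ)) ^ (a * c / r))
        ∈ Set.Icc (Real.exp (-((1 / lam) * (x / μ) ^ (1 / r)
            + (1 / b ^ c) * (x / μ) ^ (c / r)))) 1 := by
    filter_upwards [eventually_gt_atTop 0] with μ hμ
    have hu : 0 < x / μ := div_pos hx hμ
    have hy : (x / (lam ^ r * μ)) ^ (1 / r) = (1 / lam) * (x / μ) ^ (1 / r) := by
      rw [mul_comm, ← div_div, Real.div_rpow hu.le (by positivity), ← Real.rpow_mul hlam.le,
        mul_one_div_cancel hr.ne', Real.rpow_one]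
      ring
    have hz : (x / (b ^ r * μ)) ^ (a * c / r) = ((1 / b ^ c) * (x / μ) ^ (c / r)) ^ a := by
      rw [mul_comm (b ^ r), ← div_div, Real.div_rpow hu.le (by positivity), ← Real.rpow_mul hb.le,
        Real.mul_rpow (by positivity) (by positivity), Real.div_rpow zero_le_one (by positivity),
        Real.one_rpow, ← Real.rpow_mul hb.le, ← Real.rpow_mul hu.le,
        show r * (a * c / r) = c * a by field_simp, show a * c / r = c / r * a by ring]
      ring
    have hcoef : ∀ w : ℝ, (1 - ω) / Real.Gamma (a + 1) * w = (1 - ω) / Real.Gamma a * (w / a) := by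
      intro w
      rw [Real.Gamma_add_one ha.ne']
      field_simp
    rw [hy, hz, hcoef, neg_mul]
    exact ratio_mem_Icc hω0 (div_pos hω1 hΓ) ha (by positivity) (by positivity)
  exact tendsto_of_tendsto_of_tendsto_of_le_of_le' hlim tendsto_const_nhds
    (key.mono fun _ h => h.1) (key.mono fun _ h => h.2)
end
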